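/- Let Y ∈ ℝ^{n×n} and write (1/2)(Y + Yᵀ) = P Ω Pᵀ with P orthogonal and Ω = Diag(ω₁,…,ωₙ) with ω₁ ≤ ω₂ ≤ … ≤ ωₙ, and set ω̄ := (ωₙ, ω_{n−1}, …, ω₁) ∈ ℝⁿ. Suppose λ* attains the minimum of (1/2)‖λ − ω̄‖₂² over Λ(A,b) := {λ ∈ ℝⁿ : Aλ ≤ b, λ₁ ≥ … ≥ λₙ}. Then X* := P Diag(λ*ₙ, λ*_{n−1}, …, λ*₁) Pᵀ belongs to S_λ(A,b) and is a global minimizer of X ↦ (1/2)‖X − Y‖_F² over S_λ(A,b). -/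

import Mathlib

open Matrix

/-- The vector of eigenvalues of a real symmetric matrix, in descending order
(junk value `0` if the matrix is not symmetric). -/
noncomputable def eigs {n : ℕ} (X : Matrix (Fin n) (Fin n) ℝ) : Fin n → ℝ :=
  if hX : X.IsHermitian then
    fun i => (hX.eigenvalues ∘ Tuple.sort hX.eigenvalues) i.rev
  else fun _ => 0

/-- The eigenvalue constraint set `S_λ(A,b) = {X ∈ S^{n×n} : A λ(X) ≤ b}`. -/
def SLambda {m n : ℕ} (A : Matrix (Fin m) (Fin n) ℝ) (b : Fin m → ℝ) :
    Set (Matrix (Fin n) (Fin n) ℝ) :=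
  {X | X.IsHermitian ∧ ∀ i, A.mulVec (eigs X) i ≤ b i}

/-- The polyhedron `Λ(A,b) = {λ ∈ ℝⁿ : Aλ ≤ b, λ₁ ≥ … ≥ λₙ}`. -/
def LambdaSet {m n : ℕ} (A : Matrix (Fin m) (Fin n) ℝ) (b : Fin m → ℝ) :
    Set (Fin n → ℝ) :=
  {l | (∀ i, A.mulVec l i ≤ b i) ∧ Antitone l}

/-- The squared Frobenius norm of a real square matrix. -/
def frobSq {n : ℕ} (M : Matrix (Fin n) (Fin n) ℝ) : ℝ :=
  ∑ i, ∑ j, (M i j) ^ 2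

lemma aux_frobSq {n : ℕ} (M : Matrix (Fin n) (Fin n) ℝ) : frobSq M = (Mᵀ * M).trace := by
  simp only [frobSq, Matrix.trace, Matrix.diag, Matrix.mul_apply, Matrix.transpose_apply]
  rw [Finset.sum_comm]
  simp only [sq]

lemma aux_expand {n : ℕ} (X Y S : Matrix (Fin n) (Fin n) ℝ) (hX : Xᵀ = X)
    (hS : (1 / 2 : ℝ) • (Y + Yᵀ) = S) :
    frobSq (X - Y) = (X * X).trace - 2 * (X * S).trace + frobSq Y := by
  subst hS
  have h : (Yᵀ * X).trace = (X * Yᵀ).trace := Matrix.trace_mul_comm _ _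
  simp only [aux_frobSq, Matrix.transpose_sub, hX, sub_mul, mul_sub, Matrix.trace_sub,
    Matrix.mul_smul, Matrix.trace_smul, mul_add, Matrix.trace_add, h, smul_eq_mul]
  ring

lemma aux_sq {n : ℕ} (Q : Matrix (Fin n) (Fin n) ℝ) (d : Fin n → ℝ) (hQ : Qᵀ * Q = 1) :
    ((Q * diagonal d * Qᵀ) * (Q * diagonal d * Qᵀ)).trace = ∑ i, d i ^ 2 := by
  have : (Q * diagonal d * Qᵀ) * (Q * diagonal d * Qᵀ) = Q * (diagonal d * diagonal d * Qᵀ) := by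
    calc _ = Q * diagonal d * (Qᵀ * Q) * diagonal d * Qᵀ := by simp only [Matrix.mul_assoc]
      _ = _ := by rw [hQ]; simp only [Matrix.mul_assoc, Matrix.mul_one]
  rw [this, Matrix.trace_mul_comm, Matrix.mul_assoc, hQ]
  simp [Matrix.trace, sq]

lemma aux_cross {n : ℕ} (P : Matrix (Fin n) (Fin n) ℝ) (d w : Fin n → ℝ) (hQ : Pᵀ * P = 1) :
    ((P * diagonal d * Pᵀ) * (P * diagonal w * Pᵀ)).trace = ∑ i, d i * w i := by
  have : (P * diagonal d * Pᵀ) * (P * diagonal w * Pᵀ) = P * (diagonal d * diagonal w * Pᵀ) := by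
    calc _ = P * diagonal d * (Pᵀ * P) * diagonal w * Pᵀ := by simp only [Matrix.mul_assoc]
      _ = _ := by rw [hQ]; simp only [Matrix.mul_assoc, Matrix.mul_one]
  rw [this, Matrix.trace_mul_comm, Matrix.mul_assoc, hQ]
  simp [Matrix.trace]

lemma aux_ds {n : ℕ} (M : Matrix (Fin n) (Fin n) ℝ) (hM : M ∈ doublyStochastic ℝ (Fin n))
    (d w : Fin n → ℝ) (hd : Monotone d) (hw : Monotone w) :
    ∑ i, ∑ j, d i * M i j * w j ≤ ∑ i, d i * w i := by
  obtain ⟨c, hc, hc1, rfl⟩ := exists_eq_sum_perm_of_mem_doublyStochastic hM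
  have key : ∀ σ : Equiv.Perm (Fin n),
      ∑ i, ∑ j, d i * (σ.permMatrix ℝ) i j * w j = ∑ i, d i * w (σ i) := by
    intro σ
    refine Finset.sum_congr rfl fun i _ => ?_
    simp [Equiv.Perm.permMatrix, PEquiv.toMatrix_apply, Equiv.toPEquiv_apply]
  calc ∑ i, ∑ j, d i * (∑ σ, c σ • σ.permMatrix ℝ) i j * w j
      = ∑ σ, c σ * ∑ i, ∑ j, d i * (σ.permMatrix ℝ) i j * w j := by
        simp only [Matrix.sum_apply, Matrix.smul_apply, smul_eq_mul, Finset.mul_sum,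
          Finset.sum_mul]
        conv_rhs => rw [Finset.sum_comm]
        refine Finset.sum_congr rfl fun i _ => ?_
        conv_rhs => rw [Finset.sum_comm]
        refine Finset.sum_congr rfl fun j _ => Finset.sum_congr rfl fun k _ => ?_
        ring
    _ ≤ ∑ σ, c σ * ∑ i, d i * w i := by
        refine Finset.sum_le_sum fun σ _ => mul_le_mul_of_nonneg_left ?_ (hc σ)
        rw [key]
        exact (hd.monovary hw).sum_mul_comp_perm_le_sum_mul
    _ = _ := by rw [← Finset.sum_mul, hc1, one_mul]

lemma aux_vn {n : ℕ} (P Q : Matrix (Fin n) (Fin n) ℝ) (d w : Fin n → ℝ)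
    (hP : Pᵀ * P = 1) (hP' : P * Pᵀ = 1) (hQ : Qᵀ * Q = 1) (hQ' : Q * Qᵀ = 1)
    (hd : Monotone d) (hw : Monotone w) :
    ((Q * diagonal d * Qᵀ) * (P * diagonal w * Pᵀ)).trace ≤ ∑ i, d i * w i := by
  obtain ⟨W, hW⟩ : ∃ W, W = Qᵀ * P := ⟨_, rfl⟩
  have hW1 : W * Wᵀ = 1 := by
    calc _ = Qᵀ * (P * Pᵀ) * Q := by
          simp only [hW, Matrix.transpose_mul, Matrix.transpose_transpose, Matrix.mul_assoc]
      _ = 1 := by rw [hP', Matrix.mul_one, hQ]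
  have hW2 : Wᵀ * W = 1 := mul_eq_one_comm.mp hW1
  have e : ((Q * diagonal d * Qᵀ) * (P * diagonal w * Pᵀ)).trace
      = ∑ i, ∑ j, d i * (W i j) ^ 2 * w j := by
    have : (Q * diagonal d * Qᵀ) * (P * diagonal w * Pᵀ)
        = Q * (diagonal d * W * diagonal w * Pᵀ) := by
      simp only [hW, Matrix.mul_assoc]
    rw [this, Matrix.trace_mul_comm]
    have : diagonal d * W * diagonal w * Pᵀ * Q = (diagonal d * W * diagonal w) * Wᵀ := by
      simp only [hW, Matrix.mul_assoc, Matrix.transpose_mul, Matrix.transpose_transpose]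
    rw [this]
    simp only [Matrix.trace, Matrix.diag]
    refine Finset.sum_congr rfl fun i _ => ?_
    rw [Matrix.mul_apply]
    refine Finset.sum_congr rfl fun j _ => ?_
    rw [Matrix.mul_diagonal, Matrix.diagonal_mul, Matrix.transpose_apply]
    ring
  rw [e]
  have hds := aux_ds (Matrix.of fun i j => (W i j) ^ 2) ?_ d w hd hw
  · simpa only [Matrix.of_apply] using hds
  rw [mem_doublyStochastic_iff_sum]
  refine ⟨fun i j => sq_nonneg _, fun i => ?_, fun j => ?_⟩
  · have := congrFun (congrFun hW1 i) i
    simpa [Matrix.mul_apply, sq] using this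
  · have := congrFun (congrFun hW2 j) j
    simpa [Matrix.mul_apply, sq] using this

lemma aux_eigs_anti {n : ℕ} (X : Matrix (Fin n) (Fin n) ℝ) : Antitone (eigs X) := by
  unfold eigs
  split_ifs with hX
  · intro i j hij
    exact Tuple.monotone_sort hX.eigenvalues (Fin.rev_le_rev.mpr hij)
  · exact antitone_const

lemma aux_decomp {n : ℕ} (X : Matrix (Fin n) (Fin n) ℝ) (hX : X.IsHermitian) :
    ∃ Q : Matrix (Fin n) (Fin n) ℝ, Qᵀ * Q = 1 ∧ Q * Qᵀ = 1 ∧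
      X = Q * diagonal (fun i => eigs X i.rev) * Qᵀ := by
  set U : Matrix (Fin n) (Fin n) ℝ := (hX.eigenvectorUnitary).1 with hU
  have hU1 : U * Uᵀ = 1 := by
    have := Unitary.coe_mul_star_self hX.eigenvectorUnitary
    simpa [Matrix.star_eq_conjTranspose] using this
  have hXU : X = U * diagonal hX.eigenvalues * Uᵀ := by
    have := hX.spectral_theorem
    rw [Unitary.conjStarAlgAut_apply] at this
    simpa [Matrix.star_eq_conjTranspose, Function.comp_def] using this
  set σ := Tuple.sort hX.eigenvalues
  have hd : (fun i => eigs X i.rev) = hX.eigenvalues ∘ σ := by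
    funext i
    rw [eigs, dif_pos hX, Fin.rev_rev]
  have h1 : U.submatrix id σ * (U.submatrix id σ)ᵀ = 1 := by
    rw [Matrix.transpose_submatrix, Matrix.submatrix_mul_equiv, hU1]
    simp
  refine ⟨U.submatrix id σ, mul_eq_one_comm.mp h1, h1, ?_⟩
  rw [hd, ← Matrix.submatrix_diagonal_equiv, Matrix.transpose_submatrix,
    Matrix.submatrix_mul_equiv, Matrix.submatrix_mul_equiv, ← hXU]
  simp

lemma aux_herm {n : ℕ} (P : Matrix (Fin n) (Fin n) ℝ) (d : Fin n → ℝ) :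
    (P * diagonal d * Pᵀ).IsHermitian := by
  simp [Matrix.IsHermitian, Matrix.conjTranspose_eq_transpose_of_trivial, Matrix.transpose_mul,
    Matrix.mul_assoc]

lemma aux_eigs {n : ℕ} (P : Matrix (Fin n) (Fin n) ℝ) (d : Fin n → ℝ)
    (hP : Pᵀ * P = 1) (hd : Antitone d) :
    eigs (P * diagonal (fun i => d i.rev) * Pᵀ) = d := by
  set D : Fin n → ℝ := fun i => d i.rev with hD
  have hDm : Monotone D := fun i j hij => hd (Fin.rev_le_rev.mpr hij)
  have hX := aux_herm P D
  have hr := hX.roots_charpoly_eq_eigenvalues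
  have hr2 : (P * diagonal D * Pᵀ).charpoly.roots = Multiset.map D Finset.univ.val := by
    rw [Matrix.mul_assoc, Matrix.charpoly_mul_comm, Matrix.mul_assoc, hP, Matrix.mul_one,
      Matrix.charpoly_diagonal, Polynomial.roots_prod]
    · simp
    · simp [Finset.prod_ne_zero_iff, Polynomial.X_sub_C_ne_zero]
  rw [hr2] at hr
  have hperm : (List.ofFn D).Perm (List.ofFn hX.eigenvalues) := by
    rw [Fin.univ_val_map, Fin.univ_val_map] at hr
    exact Multiset.coe_eq_coe.mp hr
  have hperm2 := hperm.trans
    ((Tuple.sort hX.eigenvalues).ofFn_comp_perm hX.eigenvalues).symm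
  have heq : D = hX.eigenvalues ∘ Tuple.sort hX.eigenvalues :=
    List.ofFn_injective (hperm2.eq_of_pairwise' hDm.sortedLE_ofFn.pairwise
      (Tuple.monotone_sort hX.eigenvalues).sortedLE_ofFn.pairwise)
  funext i
  rw [eigs, dif_pos hX, ← heq]
  simp [hD]

/-- Exact projection onto the eigenvalue constraint set: if
`(1/2)(Y + Yᵀ) = P Diag(ω) Pᵀ` with `P` orthogonal and `ω` ascending, `ω̄ = (ωₙ,…,ω₁)`,
and `λ*` minimizes `(1/2)‖λ − ω̄‖²` over `Λ(A,b)`, then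
`X* = P Diag(λ*ₙ,…,λ*₁) Pᵀ` is a global minimizer of `(1/2)‖X − Y‖_F²` over `S_λ(A,b)`. -/
theorem statement8 {m n : ℕ} (A : Matrix (Fin m) (Fin n) ℝ) (b : Fin m → ℝ)
    (Y P : Matrix (Fin n) (Fin n) ℝ) (ω : Fin n → ℝ)
    (hP : Pᵀ * P = 1) (hP' : P * Pᵀ = 1)
    (hω : Monotone ω)
    (hdecomp : (1 / 2 : ℝ) • (Y + Yᵀ) = P * Matrix.diagonal ω * Pᵀ)
    (lam : Fin n → ℝ)
    (hfeas : lam ∈ LambdaSet A b)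
    (hopt : ∀ μ ∈ LambdaSet A b,
      (1 / 2 : ℝ) * ∑ i : Fin n, (lam i - ω i.rev) ^ 2 ≤
      (1 / 2 : ℝ) * ∑ i : Fin n, (μ i - ω i.rev) ^ 2) :
    P * Matrix.diagonal (fun i : Fin n => lam i.rev) * Pᵀ ∈ SLambda A b ∧
    ∀ X ∈ SLambda A b,
      (1 / 2 : ℝ) * frobSq (P * Matrix.diagonal (fun i : Fin n => lam i.rev) * Pᵀ - Y) ≤
      (1 / 2 : ℝ) * frobSq (X - Y) := by
  obtain ⟨hA, hanti⟩ := hfeas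
  have hE := aux_eigs P lam hP hanti
  have hH := aux_herm P (fun i : Fin n => lam i.rev)
  refine ⟨⟨hH, fun i => by rw [hE]; exact hA i⟩, ?_⟩
  rintro X ⟨hX, hXA⟩
  obtain ⟨Q, hQ, hQ', hXQ⟩ := aux_decomp X hX
  have hmu := hopt (eigs X) ⟨hXA, aux_eigs_anti X⟩
  have hsym : ∀ Z : Matrix (Fin n) (Fin n) ℝ, Z.IsHermitian → Zᵀ = Z := fun Z hZ => by
    rw [← Matrix.conjTranspose_eq_transpose_of_trivial]; exact hZ
  have hm : Monotone (fun i : Fin n => eigs X i.rev) :=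
    fun i j hij => aux_eigs_anti X (Fin.rev_le_rev.mpr hij)
  have e1 := aux_expand _ Y _ (hsym _ hH) hdecomp
  rw [aux_sq P _ hP, aux_cross P _ _ hP] at e1
  have e2 := aux_expand X Y _ (hsym _ hX) hdecomp
  have e3 : (X * X).trace = ∑ i : Fin n, eigs X i.rev ^ 2 := by
    have := aux_sq Q (fun i : Fin n => eigs X i.rev) hQ
    rwa [← hXQ] at this
  have e4 : (X * (P * diagonal ω * Pᵀ)).trace ≤ ∑ i : Fin n, eigs X i.rev * ω i := by
    have := aux_vn P Q (fun i : Fin n => eigs X i.rev) ω hP hP' hQ hQ' hm hω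
    rwa [← hXQ] at this
  have hsq : ∀ f : Fin n → ℝ, ∑ i : Fin n, (f i - ω i.rev) ^ 2 =
      ∑ i : Fin n, f i.rev ^ 2 - 2 * ∑ i : Fin n, f i.rev * ω i + ∑ i : Fin n, ω i ^ 2 := by
    intro f
    rw [← Equiv.sum_comp Fin.revPerm, Finset.mul_sum, ← Finset.sum_sub_distrib,
      ← Finset.sum_add_distrib]
    refine Finset.sum_congr rfl fun i _ => ?_
    simp only [Fin.revPerm_apply, Fin.rev_rev]
    ring
  rw [hsq, hsq] at hmu
  rw [e1, e2, e3]
  linarith
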